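/- The set T is closed under reflections in its elements: for all v, w ∈ T, the vector w − 2⟨w,v⟩_ℝ·v (the reflection of w in the hyperplane orthogonal to the unit vector v) again belongs to T. -/

import Mathlib

noncomputable section
open Real Complex

namespace Triacontagonal

/-- The golden ratio. -/
def τ : ℝ := (1 + Real.sqrt 5) / 2

/-- The constant 3^(-1/2) * 5^(-1/4). -/
def k0 : ℝ := (3 : ℝ) ^ (-(1:ℝ)/2) * (5 : ℝ) ^ (-(1:ℝ)/4)

/-- `a` is the positive real with 2a² = 1 + 3^(-1/2)·5^(-1/4)·τ^(3/2). -/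
def a : ℝ := Real.sqrt ((1 + k0 * τ ^ ((3:ℝ)/2)) / 2)

/-- `b` is the positive real with 2b² = 1 + 3^(-1/2)·5^(-1/4)·τ^(-3/2). -/
def b : ℝ := Real.sqrt ((1 + k0 * τ ^ (-((3:ℝ)/2))) / 2)

/-- `c` is the positive real with 2c² = 1 - 3^(-1/2)·5^(-1/4)·τ^(-3/2). -/
def c : ℝ := Real.sqrt ((1 - k0 * τ ^ (-((3:ℝ)/2))) / 2)

/-- `d` is the positive real with 2d² = 1 - 3^(-1/2)·5^(-1/4)·τ^(3/2). -/
def d : ℝ := Real.sqrt ((1 - k0 * τ ^ ((3:ℝ)/2)) / 2)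

/-- `ω = exp(iπ/30)`, a primitive 60th root of unity. -/
def ω : ℂ := Complex.exp (Real.pi * Complex.I / 30)

/-- The four cycles of 30 vectors each in ℂ², the H₄ root system. -/
def A (n : Fin 30) : Fin 2 → ℂ :=
  ![(a : ℂ) * ω ^ (2 * (n : ℕ)), (d : ℂ) * ω ^ (22 * (n : ℕ))]

def B (n : Fin 30) : Fin 2 → ℂ :=
  ![(b : ℂ) * ω ^ (2 * (n : ℕ) + 1), (c : ℂ) * ω ^ (22 * (n : ℕ) + 11)]

def C (n : Fin 30) : Fin 2 → ℂ :=
  ![(c : ℂ) * ω ^ (2 * (n : ℕ) + 1), -((b : ℂ) * ω ^ (22 * (n : ℕ) + 11))]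

def D (n : Fin 30) : Fin 2 → ℂ :=
  ![(d : ℂ) * ω ^ (2 * (n : ℕ)), -((a : ℂ) * ω ^ (22 * (n : ℕ)))]

/-- The set of the 120 vectors. -/
def T : Set (Fin 2 → ℂ) :=
  {v | ∃ n : Fin 30, v = A n ∨ v = B n ∨ v = C n ∨ v = D n}

/-- The real inner product on ℂ²: ⟨v,w⟩_ℝ = Re(Σᵢ vᵢ · conj(wᵢ)). -/
def rinner (v w : Fin 2 → ℂ) : ℝ := (∑ i, v i * star (w i)).re

/-- The associated Euclidean norm. -/
def enorm (v : Fin 2 → ℂ) : ℝ := Real.sqrt (rinner v v)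

/-!
Let `ρ = (ω², ω²²)` act on `ℂ²` by the componentwise product. It is an isometry permuting the 30
vectors of each cycle. Since `ρ⁴ = (τ - 1)(ρ + ρ² + ρ³) - 1`, the vectors `ρⁱ D₀` with `i < 4` span
over `ℤ[τ]` a `ρ`-stable module, and it contains `T`: indeed `C₀ = (1 + ρ) D₀`,
`ρ A₀ = (1 + ρ + ρ²) D₀` and `ρ B₀ = (τ - 1)(1 + ρ + ρ² + ρ³) D₀`. In these coordinates the
reflection along `D₀` has entries in `ℤ[τ]`, so that it preserves `T` is a finite exact computation.
If the reflections along `u` and `v` preserve `T`, then so does the one along the image of `v` under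
`ρ` or under the reflection along `u`, and every vector of `T` is reached from `D₀` in this way.
-/

section Reflect

variable {R M : Type*} [CommRing R] [AddCommGroup M] [Module R M] {B : LinearMap.BilinForm R M}
  {g : Module.End R M} {S : Set M} {v : M}

/-- The reflection `w ↦ w - 2 B(w, v) v` along a vector `v` that is a unit vector for the bilinear
form `B`; no normalisation by `B(v, v)` is made. -/
def reflect (B : LinearMap.BilinForm R M) (v : M) : Module.End R M :=
  Module.preReflection v ((2 : R) • B.flip v)

lemma reflect_apply (w : M) : reflect B v w = w - (2 * B w v) • v := by
  simp [reflect, Module.preReflection_apply]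

lemma map_reflect_of_isOrthogonal (hg : B.IsOrthogonal g) (w : M) :
    g (reflect B v w) = reflect B (g v) (g w) := by
  simp only [reflect_apply, map_sub, map_smul, hg w v]

lemma involutive_reflect (hv : B v v = 1) : Function.Involutive (reflect B v) :=
  Module.involutive_preReflection (by simp [hv])

lemma isOrthogonal_reflect (hB : B.IsSymm) (hv : B v v = 1) : B.IsOrthogonal (reflect B v) := by
  intro x y
  simp only [reflect_apply, map_sub, map_smul, LinearMap.sub_apply, LinearMap.smul_apply,
    smul_eq_mul, hv, ← hB.eq v y]
  ring

lemma mapsTo_reflect_map (hg : B.IsOrthogonal g) (hgS : S.MapsTo g S) (hSg : S.SurjOn g S)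
    (hv : S.MapsTo (reflect B v) S) : S.MapsTo (reflect B (g v)) S := by
  intro w hw
  obtain ⟨w, hwS, rfl⟩ := hSg hw
  rw [← map_reflect_of_isOrthogonal hg]
  exact hgS (hv hwS)

lemma mapsTo_reflect_reflect {u : M} (hB : B.IsSymm) (hu : B u u = 1)
    (huS : S.MapsTo (reflect B u) S) (hv : S.MapsTo (reflect B v) S) :
    S.MapsTo (reflect B (reflect B u v)) S :=
  mapsTo_reflect_map (isOrthogonal_reflect hB hu) huS
    (fun w hw ↦ ⟨reflect B u w, huS hw, involutive_reflect hu w⟩) hv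

end Reflect

section RealSubfield

/-- `ω² + ω⁻²`. -/
def s : ℝ := 2 * Real.cos (π / 15)

/-- `ω²² + ω⁻²²`, the conjugate of `s` over `ℚ(√5)`. -/
def t : ℝ := 2 * Real.cos (11 * π / 15)

lemma tau_sq : τ ^ 2 = τ + 1 := Real.goldenRatio_sq

lemma one_lt_tau : 1 < τ := Real.one_lt_goldenRatio

lemma two_mul_cos_pi_div_five : 2 * Real.cos (π / 5) = τ := by
  rw [Real.cos_pi_div_five, τ]
  ring

lemma s_add_t : s + t = τ - 1 := by
  have two_pi_div_five : 2 * Real.cos (2 * π / 5) = τ - 1 := by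
    rw [mul_div_assoc, Real.cos_two_mul]
    linear_combination (2 * Real.cos (π / 5) + τ) * two_mul_cos_pi_div_five + tau_sq
  have sum_to_prod := Real.cos_add_cos (11 * π / 15) (π / 15)
  rw [show (11 * π / 15 + π / 15) / 2 = 2 * π / 5 by ring,
    show (11 * π / 15 - π / 15) / 2 = π / 3 by ring, Real.cos_pi_div_three] at sum_to_prod
  rw [s, t]
  linear_combination 2 * sum_to_prod + two_pi_div_five

lemma s_mul_t : s * t = -(τ + 1) := by
  have prod_to_sum := Real.two_mul_cos_mul_cos (11 * π / 15) (π / 15)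
  rw [show 11 * π / 15 - π / 15 = π - π / 3 by ring,
    show 11 * π / 15 + π / 15 = π - π / 5 by ring, Real.cos_pi_sub, Real.cos_pi_sub,
    Real.cos_pi_div_three] at prod_to_sum
  rw [s, t]
  linear_combination 2 * prod_to_sum - two_mul_cos_pi_div_five

lemma s_sq : s ^ 2 = (τ - 1) * s + τ + 1 := by
  linear_combination s * s_add_t - s_mul_t

lemma t_sq : t ^ 2 = (τ - 1) * t + τ + 1 := by
  linear_combination t * s_add_t - s_mul_t

lemma s_pos : 0 < s := by
  have : 0 < Real.cos (π / 15) := Real.cos_pos_of_mem_Ioo (by constructor <;> linarith [pi_pos])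
  rw [s]
  positivity

lemma one_add_t_neg : 1 + t < 0 := by
  have norm_eq : (1 + s) * (1 + t) = -1 := by linear_combination s_add_t + s_mul_t
  by_contra! h
  nlinarith [s_pos]

lemma s_sub_t_pos : 0 < s - t := by linarith [s_pos, one_add_t_neg]

lemma s_sub_t_sq : (s - t) ^ 2 = 3 * √5 * τ := by
  have sqrt_five : √5 = 2 * τ - 1 := by rw [τ]; ring
  rw [sqrt_five]
  linear_combination s_sq + t_sq - 2 * s_mul_t + (τ - 1) * s_add_t - 5 * tau_sq

end RealSubfield

section Radii

lemma k0_sq : k0 ^ 2 = (3 * √5)⁻¹ := by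
  have sq_three : ((3 : ℝ) ^ (-(1 : ℝ) / 2)) ^ 2 = 3⁻¹ := by
    rw [← Real.rpow_mul_natCast (by norm_num), ← Real.rpow_neg_one]
    norm_num
  have sq_five : ((5 : ℝ) ^ (-(1 : ℝ) / 4)) ^ 2 = (√5)⁻¹ := by
    rw [← Real.rpow_mul_natCast (by norm_num), Real.sqrt_eq_rpow, ← Real.rpow_neg (by norm_num)]
    norm_num
  rw [k0, mul_pow, sq_three, sq_five, mul_inv]

lemma k0_mul_tau_rpow : k0 * τ ^ ((3 : ℝ) / 2) = (τ + 1) / (s - t) := by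
  have tau_pos : 0 < τ := one_pos.trans one_lt_tau
  have k0_nonneg : 0 ≤ k0 := by unfold k0; positivity
  have sq_tau : (τ ^ ((3 : ℝ) / 2)) ^ 2 = τ ^ 3 := by
    rw [← Real.rpow_mul_natCast tau_pos.le, ← Real.rpow_natCast]
    norm_num
  have s_sub_t_nonneg := s_sub_t_pos.le
  rw [← sq_eq_sq₀ (by positivity) (by positivity), mul_pow, k0_sq, sq_tau, div_pow, s_sub_t_sq,
    ← tau_sq]
  field_simp

lemma k0_mul_tau_rpow_neg : k0 * τ ^ (-((3 : ℝ) / 2)) = (τ - 1) / (s - t) := by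
  have tau_ne : τ ≠ 0 := (one_pos.trans one_lt_tau).ne'
  have rpow_neg : τ ^ (-((3 : ℝ) / 2)) = τ ^ ((3 : ℝ) / 2) / τ ^ 3 := by
    rw [← Real.rpow_sub_natCast tau_ne]
    norm_num
  have quotient : (τ + 1) / τ ^ 3 = τ - 1 := by
    rw [← tau_sq]
    field_simp
    linear_combination -tau_sq
  rw [rpow_neg, ← mul_div_assoc, k0_mul_tau_rpow, div_right_comm, quotient]

lemma a_sq : a ^ 2 = (1 + s) / (s - t) := by
  have radicand : (1 + k0 * τ ^ ((3 : ℝ) / 2)) / 2 = (1 + s) / (s - t) := by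
    rw [k0_mul_tau_rpow]
    field_simp [s_sub_t_pos.ne']
    linear_combination -s_add_t
  rw [a, radicand, Real.sq_sqrt (div_nonneg (by linarith [s_pos]) s_sub_t_pos.le)]

lemma b_sq : b ^ 2 = s / (s - t) := by
  have radicand : (1 + k0 * τ ^ (-((3 : ℝ) / 2))) / 2 = s / (s - t) := by
    rw [k0_mul_tau_rpow_neg]
    field_simp [s_sub_t_pos.ne']
    linear_combination -s_add_t
  rw [b, radicand, Real.sq_sqrt (div_nonneg s_pos.le s_sub_t_pos.le)]

lemma c_sq : c ^ 2 = -t / (s - t) := by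
  have radicand : (1 - k0 * τ ^ (-((3 : ℝ) / 2))) / 2 = -t / (s - t) := by
    rw [k0_mul_tau_rpow_neg]
    field_simp [s_sub_t_pos.ne']
    linear_combination s_add_t
  rw [c, radicand, Real.sq_sqrt (div_nonneg (by linarith [one_add_t_neg]) s_sub_t_pos.le)]

lemma d_sq : d ^ 2 = -(1 + t) / (s - t) := by
  have radicand : (1 - k0 * τ ^ ((3 : ℝ) / 2)) / 2 = -(1 + t) / (s - t) := by
    rw [k0_mul_tau_rpow]
    field_simp [s_sub_t_pos.ne']
    linear_combination s_add_t
  rw [d, radicand, Real.sq_sqrt (div_nonneg (by linarith [one_add_t_neg]) s_sub_t_pos.le)]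

lemma a_nonneg : 0 ≤ a := Real.sqrt_nonneg _

lemma b_nonneg : 0 ≤ b := Real.sqrt_nonneg _

lemma c_nonneg : 0 ≤ c := Real.sqrt_nonneg _

lemma d_nonneg : 0 ≤ d := Real.sqrt_nonneg _

lemma eq_mul_of_sq_eq {R : Type*} [CommRing R] [LinearOrder R] [IsStrictOrderedRing R]
    {x y r : R} (hx : 0 ≤ x) (hy : 0 ≤ y) (hr : 0 ≤ r) (h : x ^ 2 = r ^ 2 * y ^ 2) : x = r * y :=
  (sq_eq_sq₀ hx (mul_nonneg hr hy)).1 (h.trans (mul_pow r y 2).symm)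

lemma a_eq_mul_d : a = (1 + s) * d := by
  have := s_pos
  refine eq_mul_of_sq_eq a_nonneg d_nonneg (by positivity) ?_
  rw [a_sq, d_sq]
  field_simp [s_sub_t_pos.ne']
  linear_combination s_add_t + s_mul_t

lemma d_eq_mul_a : d = -(1 + t) * a := by
  rw [a_eq_mul_d]
  linear_combination d * (s_add_t + s_mul_t)

lemma c_eq_mul_d : c = 2 * Real.cos (π / 30) * d := by
  have cos_pos : 0 < Real.cos (π / 30) :=
    Real.cos_pos_of_mem_Ioo (by constructor <;> linarith [pi_pos])
  have cos_sq : (2 * Real.cos (π / 30)) ^ 2 = 2 + s := by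
    rw [s, mul_pow, Real.cos_sq]
    ring_nf
  refine eq_mul_of_sq_eq c_nonneg d_nonneg (by positivity) ?_
  rw [cos_sq, c_sq, d_sq]
  field_simp [s_sub_t_pos.ne']
  linear_combination s_add_t + s_mul_t

lemma b_eq_mul_a : b = 2 * Real.cos (11 * π / 30) * a := by
  have cos_pos : 0 < Real.cos (11 * π / 30) :=
    Real.cos_pos_of_mem_Ioo (by constructor <;> linarith [pi_pos])
  have cos_sq : (2 * Real.cos (11 * π / 30)) ^ 2 = 2 + t := by
    rw [t, mul_pow, Real.cos_sq]
    ring_nf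
  refine eq_mul_of_sq_eq b_nonneg a_nonneg (by positivity) ?_
  rw [cos_sq, b_sq, a_sq]
  field_simp [s_sub_t_pos.ne']
  linear_combination -s_add_t - s_mul_t

lemma b_eq_mul_c : b = (τ - 1) * s * c := by
  have tau_sub_one_pos : 0 < τ - 1 := sub_pos.2 one_lt_tau
  have := s_pos
  refine eq_mul_of_sq_eq b_nonneg c_nonneg (by positivity) ?_
  rw [b_sq, c_sq]
  field_simp [s_sub_t_pos.ne']
  linear_combination (τ - 1) ^ 2 * s_mul_t - τ * tau_sq

lemma c_eq_mul_b : c = -((τ - 1) * t) * b := by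
  rw [b_eq_mul_c]
  linear_combination c * ((τ - 1) ^ 2 * s_mul_t - τ * tau_sq)

end Radii

section Rotation

lemma omega_pow (n : ℕ) : ω ^ n = Complex.exp ((n * (π / 30) : ℝ) * Complex.I) := by
  rw [ω, ← Complex.exp_nat_mul]
  congr 1
  push_cast
  ring

lemma norm_omega_pow (n : ℕ) : ‖ω ^ n‖ = 1 := by
  rw [omega_pow, Complex.norm_exp_ofReal_mul_I]

lemma omega_pow_re (n : ℕ) : (ω ^ n).re = Real.cos (n * (π / 30)) := by
  rw [omega_pow, Complex.exp_ofReal_mul_I_re]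

lemma omega_pow_sixty : ω ^ 60 = 1 := by
  rw [omega_pow, ← Complex.exp_two_pi_mul_I]
  congr 1
  push_cast
  ring

lemma omega_pow_sq_add_one (n : ℕ) :
    (ω ^ n) ^ 2 + 1 = (2 * Real.cos (n * (π / 30)) : ℝ) * ω ^ n := by
  have unit : ω ^ n * star (ω ^ n) = 1 := by
    rw [Complex.star_def, Complex.mul_conj', norm_omega_pow]
    norm_num
  have trace := Complex.add_conj (ω ^ n)
  rw [omega_pow_re] at trace
  rw [← trace, ← unit, Complex.star_def]
  ring

/-- The Coxeter element as a pair of unit complex numbers; it acts on `ℂ²` by the componentwise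
product and carries each of the cycles `A`, `B`, `C`, `D` to itself. -/
def rot : Fin 2 → ℂ := ![ω ^ 2, ω ^ 22]

lemma rot_zero : rot 0 = ω ^ 2 := rfl

lemma rot_one : rot 1 = ω ^ 22 := rfl

lemma rot_pow_thirty : rot ^ 30 = 1 := by
  have h₀ : (ω ^ 2) ^ 30 = 1 := by rw [← pow_mul, omega_pow_sixty]
  have h₁ : (ω ^ 22) ^ 30 = 1 := by
    rw [← pow_mul, show 22 * 30 = 60 * 11 from rfl, pow_mul, omega_pow_sixty, one_pow]
  exact funext (Fin.forall_fin_two.2 ⟨h₀, h₁⟩)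

lemma rot_pow_mod (n : ℕ) : rot ^ (n % 30) = rot ^ n :=
  (pow_eq_pow_mod n rot_pow_thirty).symm

lemma rot_pow_add_thirty (n : ℕ) : rot ^ (n + 30) = rot ^ n := by
  rw [pow_add, rot_pow_thirty, mul_one]

/-- `rot + rot⁻¹`. -/
def rotTrace : Fin 2 → ℂ := ![(s : ℂ), (t : ℂ)]

lemma rot_sq_add_one : rot ^ 2 + 1 = rotTrace * rot := by
  have hs := omega_pow_sq_add_one 2
  have ht := omega_pow_sq_add_one 22
  rw [show ((2 : ℕ) : ℝ) * (π / 30) = π / 15 by push_cast; ring, ← s] at hs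
  rw [show ((22 : ℕ) : ℝ) * (π / 30) = 11 * π / 15 by push_cast; ring, ← t] at ht
  exact funext (Fin.forall_fin_two.2 ⟨hs, ht⟩)

lemma rotTrace_sq :
    rotTrace ^ 2 = algebraMap ℝ _ (τ - 1) * rotTrace + algebraMap ℝ _ (τ + 1) := by
  have hs : (s : ℂ) ^ 2 = (τ - 1 : ℝ) * s + (τ + 1 : ℝ) := by
    exact_mod_cast s_sq.trans (add_assoc _ _ _)
  have ht : (t : ℂ) ^ 2 = (τ - 1 : ℝ) * t + (τ + 1 : ℝ) := by
    exact_mod_cast t_sq.trans (add_assoc _ _ _)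
  exact funext (Fin.forall_fin_two.2 ⟨hs, ht⟩)

lemma rot_pow_four :
    rot ^ 4 = algebraMap ℝ _ (τ - 1) * (rot + rot ^ 2 + rot ^ 3) - 1 := by
  have hsub : algebraMap ℝ (Fin 2 → ℂ) (τ + 1) = algebraMap ℝ _ (τ - 1) + 2 := by
    rw [← map_ofNat (algebraMap ℝ (Fin 2 → ℂ)) 2, ← map_add]
    ring_nf
  linear_combination (rot ^ 2 + 1 + rotTrace * rot - algebraMap ℝ _ (τ - 1) * rot) * rot_sq_add_one
    + rot ^ 2 * rotTrace_sq + rot ^ 2 * hsub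

lemma A_eq (n : Fin 30) : A n = rot ^ (n : ℕ) * A 0 :=
  funext <| Fin.forall_fin_two.2
    ⟨show (a : ℂ) * ω ^ (2 * (n : ℕ)) = (ω ^ 2) ^ (n : ℕ) * (a * ω ^ 0) by ring,
      show (d : ℂ) * ω ^ (22 * (n : ℕ)) = (ω ^ 22) ^ (n : ℕ) * (d * ω ^ 0) by ring⟩

lemma B_eq (n : Fin 30) : B n = rot ^ (n : ℕ) * B 0 :=
  funext <| Fin.forall_fin_two.2
    ⟨show (b : ℂ) * ω ^ (2 * (n : ℕ) + 1) = (ω ^ 2) ^ (n : ℕ) * (b * ω ^ 1) by ring,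
      show (c : ℂ) * ω ^ (22 * (n : ℕ) + 11) = (ω ^ 22) ^ (n : ℕ) * (c * ω ^ 11) by ring⟩

lemma C_eq (n : Fin 30) : C n = rot ^ (n : ℕ) * C 0 :=
  funext <| Fin.forall_fin_two.2
    ⟨show (c : ℂ) * ω ^ (2 * (n : ℕ) + 1) = (ω ^ 2) ^ (n : ℕ) * (c * ω ^ 1) by ring,
      show -((b : ℂ) * ω ^ (22 * (n : ℕ) + 11)) = (ω ^ 22) ^ (n : ℕ) * -(b * ω ^ 11) by ring⟩

lemma D_eq (n : Fin 30) : D n = rot ^ (n : ℕ) * D 0 :=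
  funext <| Fin.forall_fin_two.2
    ⟨show (d : ℂ) * ω ^ (2 * (n : ℕ)) = (ω ^ 2) ^ (n : ℕ) * (d * ω ^ 0) by ring,
      show -((a : ℂ) * ω ^ (22 * (n : ℕ))) = (ω ^ 22) ^ (n : ℕ) * -(a * ω ^ 0) by ring⟩

lemma C_zero_eq : C 0 = (1 + rot) * D 0 := by
  have fst : (c : ℂ) * ω ^ 1 = (1 + ω ^ 2) * (d * ω ^ 0) := by
    have trace := omega_pow_sq_add_one 1
    rw [Nat.cast_one, one_mul] at trace
    rw [c_eq_mul_d, ofReal_mul]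
    linear_combination -d * trace
  have snd : -((b : ℂ) * ω ^ 11) = (1 + ω ^ 22) * -(a * ω ^ 0) := by
    have trace := omega_pow_sq_add_one 11
    rw [Nat.cast_ofNat, ← mul_div_assoc] at trace
    rw [b_eq_mul_a, ofReal_mul]
    linear_combination a * trace
  exact funext (Fin.forall_fin_two.2 ⟨fst, snd⟩)

lemma A_zero_eq : A 0 = (1 + rotTrace) * D 0 := by
  have fst : (a : ℂ) * ω ^ 0 = (1 + s) * (d * ω ^ 0) := by
    rw [a_eq_mul_d]
    push_cast
    ring
  have snd : (d : ℂ) * ω ^ 0 = (1 + t) * -(a * ω ^ 0) := by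
    rw [d_eq_mul_a]
    push_cast
    ring
  exact funext (Fin.forall_fin_two.2 ⟨fst, snd⟩)

lemma B_zero_eq : B 0 = algebraMap ℝ _ (τ - 1) * rotTrace * C 0 := by
  have fst : (b : ℂ) * ω ^ 1 = (τ - 1 : ℝ) * s * (c * ω ^ 1) := by
    rw [b_eq_mul_c]
    push_cast
    ring
  have snd : (c : ℂ) * ω ^ 11 = (τ - 1 : ℝ) * t * -(b * ω ^ 11) := by
    rw [c_eq_mul_b]
    push_cast
    ring
  exact funext (Fin.forall_fin_two.2 ⟨fst, snd⟩)

end Rotation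

section InnerProduct

lemma rinner_apply (v w : Fin 2 → ℂ) : rinner v w =
    (v 0).re * (w 0).re + (v 0).im * (w 0).im + ((v 1).re * (w 1).re + (v 1).im * (w 1).im) := by
  simp [rinner, Fin.sum_univ_two]

lemma rinner_comm (v w : Fin 2 → ℂ) : rinner v w = rinner w v := by
  rw [rinner_apply, rinner_apply]
  ring

lemma rinner_add_left (u v w : Fin 2 → ℂ) : rinner (u + v) w = rinner u w + rinner v w := by
  simp only [rinner_apply, Pi.add_apply, add_re, add_im]
  ring

lemma rinner_smul_left (r : ℝ) (v w : Fin 2 → ℂ) : rinner (r • v) w = r • rinner v w := by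
  simp only [rinner_apply, Pi.smul_apply, smul_re, smul_im, smul_eq_mul]
  ring

/-- `rinner` as a bilinear form. -/
def rinnerForm : LinearMap.BilinForm ℝ (Fin 2 → ℂ) :=
  LinearMap.mk₂ ℝ rinner rinner_add_left rinner_smul_left
    (fun u v w ↦ by simp only [rinner_comm u, rinner_add_left])
    (fun r v w ↦ by simp only [rinner_comm v, rinner_smul_left])

lemma rinnerForm_apply (v w : Fin 2 → ℂ) : rinnerForm v w = rinner v w := rfl

lemma isSymm_rinnerForm : rinnerForm.IsSymm := ⟨rinner_comm⟩

lemma isOrthogonal_mulLeft {u : Fin 2 → ℂ} (hu : ∀ i, ‖u i‖ = 1) :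
    rinnerForm.IsOrthogonal (LinearMap.mulLeft ℝ u) := by
  intro v w
  have unit (i : Fin 2) : u i * star (u i) = 1 := by
    rw [Complex.star_def, Complex.mul_conj', hu]
    norm_num
  simp only [rinnerForm_apply, rinner, LinearMap.mulLeft_apply, Pi.mul_apply, star_mul']
  congr 1
  refine Finset.sum_congr rfl fun i _ ↦ ?_
  linear_combination (v i * star (w i)) * unit i

lemma isOrthogonal_mulLeft_rot_pow (n : ℕ) :
    rinnerForm.IsOrthogonal (LinearMap.mulLeft ℝ (rot ^ n)) :=
  isOrthogonal_mulLeft <| Fin.forall_fin_two.2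
    ⟨by rw [Pi.pow_apply, rot_zero, ← pow_mul, norm_omega_pow],
      by rw [Pi.pow_apply, rot_one, ← pow_mul, norm_omega_pow]⟩

lemma two_mul_rinner_rot_pow_mul_D (n : ℕ) :
    2 * rinner (rot ^ n * D 0) (D 0) =
      d ^ 2 * (2 * Real.cos (n * (π / 15))) + a ^ 2 * (2 * Real.cos (n * (11 * π / 15))) := by
  have h₀ : ((ω ^ 2) ^ n).re = Real.cos (n * (π / 15)) := by
    rw [← pow_mul, omega_pow_re]
    push_cast
    ring_nf
  have h₁ : ((ω ^ 22) ^ n).re = Real.cos (n * (11 * π / 15)) := by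
    rw [← pow_mul, omega_pow_re]
    push_cast
    ring_nf
  have D_zero : D 0 = ![(d : ℂ), -(a : ℂ)] := by simp [D]
  rw [← h₀, ← h₁, D_zero, rinner_apply]
  simp only [Pi.mul_apply, Pi.pow_apply, rot_zero, rot_one, Matrix.cons_val_zero,
    Matrix.cons_val_one, mul_re, mul_im, neg_re, neg_im, ofReal_re, ofReal_im]
  ring

lemma d_sq_add_a_sq : d ^ 2 + a ^ 2 = 1 := by
  rw [a_sq, d_sq]
  field_simp [s_sub_t_pos.ne']
  ring

lemma d_sq_mul_s_add_a_sq_mul_t : d ^ 2 * s + a ^ 2 * t = -1 := by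
  rw [a_sq, d_sq]
  field_simp [s_sub_t_pos.ne']
  ring

lemma rinner_D_zero_self : rinner (D 0) (D 0) = 1 := by
  have h := two_mul_rinner_rot_pow_mul_D 0
  simp only [pow_zero, one_mul, Nat.cast_zero, zero_mul, Real.cos_zero] at h
  linear_combination h / 2 + d_sq_add_a_sq

lemma two_mul_rinner_rot_mul_D_zero : 2 * rinner (rot * D 0) (D 0) = -1 := by
  have h := two_mul_rinner_rot_pow_mul_D 1
  simp only [pow_one, Nat.cast_one, one_mul] at h
  rw [← s, ← t] at h
  exact h.trans d_sq_mul_s_add_a_sq_mul_t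

lemma rinner_rot_sq_mul_D_zero : rinner (rot ^ 2 * D 0) (D 0) = 0 := by
  have h := two_mul_rinner_rot_pow_mul_D 2
  simp only [Nat.cast_ofNat, Real.cos_two_mul] at h
  have hs := s_sq
  have ht := t_sq
  rw [s] at hs
  rw [t] at ht
  have trace := d_sq_mul_s_add_a_sq_mul_t
  rw [s, t] at trace
  linear_combination h / 2 + d ^ 2 / 2 * hs + a ^ 2 / 2 * ht + (τ - 1) / 2 * trace
    + (τ - 1) / 2 * d_sq_add_a_sq

lemma two_mul_rinner_rot_pow_three_mul_D_zero : 2 * rinner (rot ^ 3 * D 0) (D 0) = τ := by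
  have cos_fst : Real.cos ((3 : ℕ) * (π / 15)) = Real.cos (π / 5) := by
    congr 1
    push_cast
    ring
  have cos_snd : Real.cos ((3 : ℕ) * (11 * π / 15)) = Real.cos (π / 5) := by
    rw [← Real.cos_add_two_pi (π / 5)]
    congr 1
    push_cast
    ring
  rw [two_mul_rinner_rot_pow_mul_D, cos_fst, cos_snd, two_mul_cos_pi_div_five]
  linear_combination τ * d_sq_add_a_sq

end InnerProduct

section Coordinates

/-- The ring `ℤ[τ]` in computable form, `⟨x, y⟩` standing for `x + y τ`. -/
abbrev GoldenInt : Type := QuadraticAlgebra ℤ 1 1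

/-- The embedding `ℤ[τ] → ℝ`. -/
def goldenEval : GoldenInt →ₐ[ℤ] ℝ :=
  QuadraticAlgebra.lift ⟨τ, by rw [← sq, tau_sq, one_smul, one_smul, add_comm]⟩

lemma goldenEval_mk (x y : ℤ) : goldenEval ⟨x, y⟩ = x + y * τ := by
  simp [goldenEval]

lemma goldenEval_tau : goldenEval ⟨0, 1⟩ = τ := by
  rw [goldenEval_mk, Int.cast_zero, Int.cast_one, zero_add, one_mul]

lemma goldenEval_tau_sub_one : goldenEval ⟨-1, 1⟩ = τ - 1 := by
  rw [goldenEval_mk]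
  push_cast
  ring

/-- The vector with coordinates `p` in the basis `D 0, ρ D 0, ρ² D 0, ρ³ D 0`, where `ρ = rot`. -/
def ofCoord (p : Fin 4 → GoldenInt) : Fin 2 → ℂ :=
  ∑ i, goldenEval (p i) • (rot ^ (i : ℕ) * D 0)

lemma ofCoord_eq (p : Fin 4 → GoldenInt) :
    ofCoord p = (algebraMap ℝ _ (goldenEval (p 0)) + algebraMap ℝ _ (goldenEval (p 1)) * rot +
      algebraMap ℝ _ (goldenEval (p 2)) * rot ^ 2 +
      algebraMap ℝ _ (goldenEval (p 3)) * rot ^ 3) * D 0 := by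
  simp only [ofCoord, Fin.sum_univ_four, Algebra.smul_def, Fin.coe_ofNat_eq_mod, Nat.reduceMod]
  ring

/-- Multiplication by `rot` in coordinates, the companion matrix of `rot_pow_four`. -/
def rotCoord (p : Fin 4 → GoldenInt) : Fin 4 → GoldenInt :=
  ![-p 3, p 0 + ⟨-1, 1⟩ * p 3, p 1 + ⟨-1, 1⟩ * p 3, p 2 + ⟨-1, 1⟩ * p 3]

lemma ofCoord_rotCoord (p : Fin 4 → GoldenInt) : ofCoord (rotCoord p) = rot * ofCoord p := by
  simp only [ofCoord_eq, rotCoord, Matrix.cons_val, map_add, map_mul, map_neg,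
    goldenEval_tau_sub_one]
  linear_combination -algebraMap ℝ _ (goldenEval (p 3)) * D 0 * rot_pow_four

lemma ofCoord_iterate_rotCoord (n : ℕ) (p : Fin 4 → GoldenInt) :
    ofCoord (rotCoord^[n] p) = rot ^ n * ofCoord p := by
  induction n with
  | zero => simp
  | succ n ih => rw [Function.iterate_succ_apply', ofCoord_rotCoord, ih, pow_succ', mul_assoc]

/-- The reflection along `D 0` in coordinates; the pairings `2⟨ρⁱ D 0, D 0⟩` are `2, -1, 0, τ`. -/
def reflectCoord (p : Fin 4 → GoldenInt) : Fin 4 → GoldenInt :=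
  p - Pi.single 0 (2 * p 0 - p 1 + ⟨0, 1⟩ * p 3)

lemma two_mul_rinner_ofCoord (p : Fin 4 → GoldenInt) :
    2 * rinner (ofCoord p) (D 0) = goldenEval (2 * p 0 - p 1 + ⟨0, 1⟩ * p 3) := by
  have expand : rinner (ofCoord p) (D 0) =
      ∑ i, goldenEval (p i) * rinner (rot ^ (i : ℕ) * D 0) (D 0) := by
    simp only [← rinnerForm_apply, ofCoord, map_sum, map_smul, LinearMap.sum_apply,
      LinearMap.smul_apply, smul_eq_mul]
  rw [expand, Fin.sum_univ_four]
  simp only [Fin.coe_ofNat_eq_mod, Nat.reduceMod, pow_zero, one_mul, pow_one, rinner_D_zero_self,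
    rinner_rot_sq_mul_D_zero, map_add, map_sub, map_mul, goldenEval_tau,
    map_ofNat]
  linear_combination goldenEval (p 1) * two_mul_rinner_rot_mul_D_zero
    + goldenEval (p 3) * two_mul_rinner_rot_pow_three_mul_D_zero

lemma ofCoord_reflectCoord (p : Fin 4 → GoldenInt) :
    ofCoord (reflectCoord p) = reflect rinnerForm (D 0) (ofCoord p) := by
  rw [reflect_apply, rinnerForm_apply, two_mul_rinner_ofCoord]
  simp only [ofCoord, reflectCoord, Pi.sub_apply, map_sub goldenEval (p _), sub_smul,
    Finset.sum_sub_distrib]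
  congr 1
  rw [Fintype.sum_eq_single 0 fun i hi ↦ by simp [Pi.single_eq_of_ne hi]]
  simp

/-- Coordinates of one vector in each of the four cycles: `D 0`, `C 0`, `ρ A 0`, `ρ B 0`. -/
def cycleRep : Fin 4 → Fin 4 → GoldenInt :=
  ![![1, 0, 0, 0], ![1, 1, 0, 0], ![1, 1, 1, 0], fun _ ↦ ⟨-1, 1⟩]

lemma ofCoord_cycleRep_zero : ofCoord (cycleRep 0) = D 0 := by
  simp only [ofCoord_eq, cycleRep, Matrix.cons_val, map_one, map_zero]
  ring

lemma ofCoord_cycleRep_one : ofCoord (cycleRep 1) = C 0 := by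
  simp only [C_zero_eq, ofCoord_eq, cycleRep, Matrix.cons_val, map_one, map_zero]
  ring

lemma ofCoord_cycleRep_two : ofCoord (cycleRep 2) = rot * A 0 := by
  simp only [A_zero_eq, ofCoord_eq, cycleRep, Matrix.cons_val, map_one, map_zero]
  linear_combination D 0 * rot_sq_add_one

lemma ofCoord_cycleRep_three : ofCoord (cycleRep 3) = rot * B 0 := by
  simp only [B_zero_eq, C_zero_eq, ofCoord_eq, cycleRep, Matrix.cons_val, goldenEval_tau_sub_one]
  linear_combination algebraMap ℝ _ (τ - 1) * (1 + rot) * D 0 * rot_sq_add_one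

lemma exists_reflectCoord_iterate_rotCoord_cycleRep : ∀ (k : Fin 4) (n : Fin 30),
    ∃ (k' : Fin 4) (n' : Fin 30),
      reflectCoord (rotCoord^[n] (cycleRep k)) = rotCoord^[n'] (cycleRep k') := by
  decide +kernel

end Coordinates

section RootSystem

lemma mem_T_iff {v : Fin 2 → ℂ} : v ∈ T ↔ ∃ k, ∃ n : ℕ, v = rot ^ n * ofCoord (cycleRep k) := by
  constructor
  · rintro ⟨n, rfl | rfl | rfl | rfl⟩
    · refine ⟨2, n + 29, ?_⟩
      rw [ofCoord_cycleRep_two, A_eq, ← mul_assoc, ← pow_succ, ← rot_pow_add_thirty]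
    · refine ⟨3, n + 29, ?_⟩
      rw [ofCoord_cycleRep_three, B_eq, ← mul_assoc, ← pow_succ, ← rot_pow_add_thirty]
    · exact ⟨1, n, by rw [ofCoord_cycleRep_one, C_eq]⟩
    · exact ⟨0, n, by rw [ofCoord_cycleRep_zero, D_eq]⟩
  · rintro ⟨k, n, rfl⟩
    fin_cases k
    · refine ⟨Fin.ofNat 30 n, .inr <| .inr <| .inr ?_⟩
      rw [D_eq, Fin.val_ofNat, rot_pow_mod]
      exact congrArg _ ofCoord_cycleRep_zero
    · refine ⟨Fin.ofNat 30 n, .inr <| .inr <| .inl ?_⟩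
      rw [C_eq, Fin.val_ofNat, rot_pow_mod]
      exact congrArg _ ofCoord_cycleRep_one
    · refine ⟨Fin.ofNat 30 (n + 1), .inl ?_⟩
      rw [A_eq, Fin.val_ofNat, rot_pow_mod, pow_succ, mul_assoc]
      exact congrArg _ ofCoord_cycleRep_two
    · refine ⟨Fin.ofNat 30 (n + 1), .inr <| .inl ?_⟩
      rw [B_eq, Fin.val_ofNat, rot_pow_mod, pow_succ, mul_assoc]
      exact congrArg _ ofCoord_cycleRep_three

lemma rot_pow_mul_mem_T {v : Fin 2 → ℂ} (n : ℕ) (hv : v ∈ T) : rot ^ n * v ∈ T := by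
  obtain ⟨k, m, rfl⟩ := mem_T_iff.1 hv
  exact mem_T_iff.2 ⟨k, n + m, by rw [pow_add, mul_assoc]⟩

lemma mapsTo_reflect_rot_pow_mul {v : Fin 2 → ℂ} (n : ℕ) (hv : T.MapsTo (reflect rinnerForm v) T) :
    T.MapsTo (reflect rinnerForm (rot ^ n * v)) T := by
  have mapsTo : T.MapsTo (LinearMap.mulLeft ℝ (rot ^ n)) T := fun w hw ↦ by
    rw [LinearMap.mulLeft_apply]
    exact rot_pow_mul_mem_T n hw
  have surjOn : T.SurjOn (LinearMap.mulLeft ℝ (rot ^ n)) T := fun w hw ↦ by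
    refine ⟨rot ^ (29 * n) * w, rot_pow_mul_mem_T _ hw, ?_⟩
    rw [LinearMap.mulLeft_apply, ← mul_assoc, ← pow_add, show n + 29 * n = 30 * n by ring, pow_mul,
      rot_pow_thirty, one_pow, one_mul]
  rw [← LinearMap.mulLeft_apply (R := ℝ)]
  exact mapsTo_reflect_map (isOrthogonal_mulLeft_rot_pow n) mapsTo surjOn hv

lemma mapsTo_reflect_D_zero : T.MapsTo (reflect rinnerForm (D 0)) T := by
  intro w hw
  obtain ⟨k, n, rfl⟩ := mem_T_iff.1 hw
  obtain ⟨k', n', h⟩ := exists_reflectCoord_iterate_rotCoord_cycleRep k (Fin.ofNat 30 n)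
  refine mem_T_iff.2 ⟨k', n', ?_⟩
  rw [← rot_pow_mod n, ← Fin.val_ofNat, ← ofCoord_iterate_rotCoord, ← ofCoord_reflectCoord, h,
    ofCoord_iterate_rotCoord]

lemma mapsTo_reflect_reflectCoord {p : Fin 4 → GoldenInt} (n : ℕ)
    (hp : T.MapsTo (reflect rinnerForm (ofCoord p)) T) :
    T.MapsTo (reflect rinnerForm (ofCoord (reflectCoord (rotCoord^[n] p)))) T := by
  rw [ofCoord_reflectCoord, ofCoord_iterate_rotCoord]
  exact mapsTo_reflect_reflect isSymm_rinnerForm rinner_D_zero_self mapsTo_reflect_D_zero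
    (mapsTo_reflect_rot_pow_mul n hp)

lemma mapsTo_reflect_cycleRep (k : Fin 4) :
    T.MapsTo (reflect rinnerForm (ofCoord (cycleRep k))) T := by
  have h₀ : T.MapsTo (reflect rinnerForm (ofCoord (cycleRep 0))) T := by
    rw [ofCoord_cycleRep_zero]
    exact mapsTo_reflect_D_zero
  have h₁ : T.MapsTo (reflect rinnerForm (ofCoord (cycleRep 1))) T := by
    rw [show cycleRep 1 = reflectCoord (rotCoord^[1] (cycleRep 0)) by decide +kernel]
    exact mapsTo_reflect_reflectCoord 1 h₀
  have h₂ : T.MapsTo (reflect rinnerForm (ofCoord (cycleRep 2))) T := by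
    rw [show cycleRep 2 = reflectCoord (rotCoord^[1] (cycleRep 1)) by decide +kernel]
    exact mapsTo_reflect_reflectCoord 1 h₁
  have h₃ : T.MapsTo (reflect rinnerForm (ofCoord (cycleRep 3))) T := by
    rw [show cycleRep 3 = reflectCoord (rotCoord^[4] (cycleRep 0)) by decide +kernel]
    exact mapsTo_reflect_reflectCoord 4 h₀
  fin_cases k
  exacts [h₀, h₁, h₂, h₃]

end RootSystem

/-- T is closed under reflections in its elements. -/
theorem stmt18 : ∀ v ∈ T, ∀ w ∈ T, w - (2 * rinner w v) • v ∈ T := by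
  intro v hv w hw
  obtain ⟨k, n, rfl⟩ := mem_T_iff.1 hv
  rw [← rinnerForm_apply, ← reflect_apply]
  exact mapsTo_reflect_rot_pow_mul n (mapsTo_reflect_cycleRep k) hw

end Triacontagonal
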